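/- arXiv:1311.3512 — 2 statements merged into one kernel-verified Lean document; each statement's English description precedes it below -/
import Mathlib

section
/- Let α ∈ (−1,1), let f(t) = (1−t)log(1−t) + (1+t)log(1+t) (extended continuously by f(±1) = 2 log 2), and define g(x) := ((α−x)/2)·f((α+x)/2) + ((x−1)/2)·f((x+1)/2) for x ∈ [α,1). Then lim_{x→1⁻} g(x) = ((α−1)/2)·f((α+1)/2) = g(α), and g(x) < g(α) for every x ∈ (α,1). -/
/-!
Up to the factor `-1 / 2`, `gPole α x` is the midpoint rule for `∫ fLog` over `[α, 1]` with the
nodes `α, x, 1`. At both endpoints the partition degenerates to the single interval `[α, 1]`; in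
between, `x` is a genuine refinement, and refining the partition strictly increases the midpoint
rule of a strictly convex function, since the midpoint of the whole interval is the average of the
midpoints of the two pieces, weighted by their lengths.
-/

/-- `f(t) = (1-t)log(1-t) + (1+t)log(1+t)`.  Since `Real.log 0 = 0` in Lean, this formula
automatically realizes the continuous extension `f(±1) = 2 log 2`. -/
noncomputable def fLog (t : ℝ) : ℝ :=
  (1 - t) * Real.log (1 - t) + (1 + t) * Real.log (1 + t)

/-- The nonlocal contribution (up to an additive constant depending only on `α`) of the
triangular wave on `[α,1]` vanishing at `α`, `x` and `1`. -/
noncomputable def gPole (α x : ℝ) : ℝ :=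
  ((α - x) / 2) * fLog ((α + x) / 2) + ((x - 1) / 2) * fLog ((x + 1) / 2)

lemma strictConvexOn_comp_affineMap {𝕜 E F β : Type*} [Ring 𝕜] [PartialOrder 𝕜]
    [AddCommGroup E] [Module 𝕜 E] [AddCommGroup F] [Module 𝕜 F]
    [AddCommMonoid β] [PartialOrder β] [SMul 𝕜 β] {f : F → β} {s : Set F}
    (hf : StrictConvexOn 𝕜 s f) {g : E →ᵃ[𝕜] F} (hg : Function.Injective g) :
    StrictConvexOn 𝕜 (g ⁻¹' s) (f ∘ g) := by
  refine ⟨hf.1.affine_preimage g, fun x hx y hy hxy a b ha hb hab => ?_⟩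
  simpa only [Function.comp_apply, Convex.combo_affine_apply hab]
    using hf.2 hx hy (hg.ne hxy) ha hb hab

section MidpointRule

variable {𝕜 β : Type*} [Field 𝕜] [AddCommGroup β] [Module 𝕜 β]

/-- The one-point midpoint quadrature rule `(b - a) f((a + b) / 2)` for `∫ f` over `[a, b]`, used
to read `gPole` as a composite rule. As for the integral, the sign changes when `b < a`. -/
def midpointRule (f : 𝕜 → β) (a b : 𝕜) : β :=
  (b - a) • f ((a + b) / 2)

@[simp]
lemma midpointRule_self (f : 𝕜 → β) (a : 𝕜) : midpointRule f a a = 0 := by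
  simp [midpointRule]

lemma midpointRule_lt_add_of_strictConvexOn [LinearOrder 𝕜] [IsStrictOrderedRing 𝕜]
    [PartialOrder β] [PosSMulStrictMono 𝕜 β] {f : 𝕜 → β} {s : Set 𝕜} (hf : StrictConvexOn 𝕜 s f)
    {a x b : 𝕜} (ha : a ∈ s) (hb : b ∈ s) (hax : a < x) (hxb : x < b) :
    midpointRule f a b < midpointRule f a x + midpointRule f x b := by
  have hab : 0 < b - a := sub_pos.2 (hax.trans hxb)
  have hIcc : Set.Icc a b ⊆ s := hf.1.ordConnected.out ha hb
  have hleft : (a + x) / 2 ∈ s := hIcc ⟨by linarith, by linarith⟩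
  have hright : (x + b) / 2 ∈ s := hIcc ⟨by linarith, by linarith⟩
  have hmid : (x - a) / (b - a) * ((a + x) / 2) + (b - x) / (b - a) * ((x + b) / 2)
      = (a + b) / 2 := by
    field_simp
    ring
  have jensen := hf.2 hleft hright (by intro h; linarith) (div_pos (sub_pos.2 hax) hab)
    (div_pos (sub_pos.2 hxb) hab) (by field_simp; ring)
  rw [smul_eq_mul, smul_eq_mul, hmid] at jensen
  simpa only [midpointRule, smul_add, smul_smul, mul_div_cancel₀ _ hab.ne']
    using smul_lt_smul_of_pos_left jensen hab

end MidpointRule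

@[fun_prop]
lemma continuous_fLog : Continuous fLog :=
  (Real.continuous_mul_log.comp (continuous_const.sub continuous_id)).add
    (Real.continuous_mul_log.comp (continuous_const.add continuous_id))

lemma strictConvexOn_fLog : StrictConvexOn ℝ (Set.Icc (-1) 1) fLog := by
  have hIcc : Convex ℝ (Set.Icc (-1 : ℝ) 1) := convex_Icc _ _
  have hsub : StrictConvexOn ℝ (Set.Icc (-1) 1) fun t : ℝ => (1 - t) * Real.log (1 - t) :=
    (strictConvexOn_comp_affineMap Real.strictConvexOn_mul_log
      (g := (AffineEquiv.constVSub ℝ (1 : ℝ)).toAffineMap)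
      (AffineEquiv.injective _)).subset (fun _ ht => sub_nonneg.2 ht.2) hIcc
  have hadd : StrictConvexOn ℝ (Set.Icc (-1) 1) fun t : ℝ => (1 + t) * Real.log (1 + t) :=
    (strictConvexOn_comp_affineMap Real.strictConvexOn_mul_log
      (g := (AffineEquiv.constVAdd ℝ ℝ (1 : ℝ)).toAffineMap)
      (AffineEquiv.injective _)).subset (fun _ ht => neg_le_iff_add_nonneg'.1 ht.1) hIcc
  exact hsub.add hadd

lemma gPole_eq_midpointRule (α x : ℝ) :
    gPole α x = -(midpointRule fLog α x + midpointRule fLog x 1) / 2 := by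
  simp only [gPole, midpointRule, smul_eq_mul]
  ring

lemma continuous_gPole (α : ℝ) : Continuous (gPole α) := by
  unfold gPole
  fun_prop

lemma gPole_self (α : ℝ) : gPole α α = (α - 1) / 2 * fLog ((α + 1) / 2) := by
  simp [gPole]

lemma gPole_one (α : ℝ) : gPole α 1 = (α - 1) / 2 * fLog ((α + 1) / 2) := by
  simp [gPole]

lemma gPole_lt_gPole_self {α x : ℝ} (hα : -1 ≤ α) (hx : x ∈ Set.Ioo α 1) :
    gPole α x < gPole α α := by
  have hα' : α ∈ Set.Icc (-1) 1 := ⟨hα, (hx.1.trans hx.2).le⟩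
  have hrefine : midpointRule fLog α 1 < midpointRule fLog α x + midpointRule fLog x 1 :=
    midpointRule_lt_add_of_strictConvexOn strictConvexOn_fLog hα' (by simp) hx.1 hx.2
  rw [gPole_eq_midpointRule, gPole_eq_midpointRule, midpointRule_self, zero_add]
  linarith

/-- For `α ∈ (-1,1)`, the function `g(x) = ((α−x)/2)f((α+x)/2)
+ ((x−1)/2)f((x+1)/2)` on `[α,1)` satisfies `lim_{x→1⁻} g(x) = ((α−1)/2)f((α+1)/2) = g(α)`,
and `g(x) < g(α)` for every `x ∈ (α,1)`. -/
theorem nonlocal_contribution_below_boundary_value (α : ℝ) (hα : α ∈ Set.Ioo (-1 : ℝ) 1) :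
    Filter.Tendsto (gPole α) (nhdsWithin 1 (Set.Iio 1))
        (nhds (((α - 1) / 2) * fLog ((α + 1) / 2))) ∧
      ((α - 1) / 2) * fLog ((α + 1) / 2) = gPole α α ∧
      ∀ x ∈ Set.Ioo α 1, gPole α x < gPole α α := by
  refine ⟨?_, (gPole_self α).symm, fun x hx => gPole_lt_gPole_self hα.1.le hx⟩
  rw [← gPole_one]
  exact (continuous_gPole α).continuousWithinAt
end

section
/- For every γ > 0 there exists N ∈ ℕ such that: if an axisymmetric configuration −1 = z₀ < z₁ < ⋯ < z_n < z_{n+1} = 1 is a critical point of E_γ, then n ≤ N. In other words, for fixed γ > 0 the number of interfaces of an axisymmetric critical point is bounded from above, and in particular no axisymmetric critical point has infinitely many interfaces. -/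
/-- The axisymmetric step pattern with `n` interfaces located at `z 1 < ⋯ < z n`
(with `z 0 = -1`, `z (n+1) = 1`): `u(t) = (-1)^(k+1)` for `t ∈ [z k, z (k+1))`,
so `u = -1` on `[-1, z 1)`. -/
noncomputable def pattern (n : ℕ) (z : ℕ → ℝ) (t : ℝ) : ℝ :=
  (-1 : ℝ) ^ (((Finset.Icc 1 n).filter (fun i => z i ≤ t)).card + 1)

/-- The mass `m = (1/2)∫_{-1}^1 u(t) dt`. -/
noncomputable def mass (n : ℕ) (z : ℕ → ℝ) : ℝ :=
  (1 / 2) * ∫ t in (-1 : ℝ)..1, pattern n z t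

/-- `ξ(t) = ∫_{-1}^t (u(s) - m) ds`. -/
noncomputable def xi (n : ℕ) (z : ℕ → ℝ) (t : ℝ) : ℝ :=
  ∫ s in (-1 : ℝ)..t, (pattern n z s - mass n z)

/-- The potential `v(t) = ∫_0^t ξ(s)/(1-s²) ds`. -/
noncomputable def pot (n : ℕ) (z : ℕ → ℝ) (t : ℝ) : ℝ :=
  ∫ s in (0 : ℝ)..t, xi n z s / (1 - s ^ 2)

/-- `z` is an axisymmetric configuration with `n` interfaces:
`-1 = z 0 < z 1 < ⋯ < z n < z (n+1) = 1`. -/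
def IsConfig (n : ℕ) (z : ℕ → ℝ) : Prop :=
  z 0 = -1 ∧ z (n + 1) = 1 ∧ ∀ i j, i < j → j ≤ n + 1 → z i < z j

/-- The configuration is a critical point of `E_γ`: the Euler–Lagrange equation
`κ_g(z_k) + 4γ v(z_k) = λ` holds at every interface `z 1, …, z n`, with a single
constant `λ`; here `κ_g(z_k) = (-1)^(k+1) z_k / √(1 - z_k²)` is the signed geodesic
curvature of the interface circle with respect to the outer normal of `{u = 1}`. -/
def IsCritical (γ : ℝ) (n : ℕ) (z : ℕ → ℝ) : Prop :=
  ∃ lam : ℝ, ∀ k, 1 ≤ k → k ≤ n →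
    (-1 : ℝ) ^ (k + 1) * z k / Real.sqrt (1 - z k ^ 2) + 4 * γ * pot n z (z k) = lam

/-!
The identity `v'(z) = ξ(z) / (1 - z²)` and three properties of `ξ` suffice: it is `2`-Lipschitz and
vanishes at both poles.

Let `0 ≤ a < b < c < 1` be three consecutive interfaces and `κ(x) = x / √(1 - x²)`. Subtracting
consecutive Euler–Lagrange equations gives `ε (κ(a) + κ(b)) = 4γ ∫_a^b v'` and
`-ε (κ(b) + κ(c)) = 4γ ∫_b^c v'` with the same sign `ε`. The two integrals have opposite signs, so
`ξ` vanishes somewhere in `[a, c]`, and the Lipschitz bound yields `|v'| ≤ 4c` on `[0, c]`. Hence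
`c ≤ κ(b) + κ(c) ≤ 16 |γ| c (c - b)`: the factor `c`, by which the curvature degenerates near the
equator, cancels, and `1 ≤ 16 |γ| (c - b)`. Reflection in the equator treats three consecutive
interfaces in `(-1, 0]`.

Among five consecutive interfaces, the first three or the last three lie on one side of the
equator, so `1 ≤ 16 |γ| (z_{k+4} - z_k)`, and `[-1, 1]` has room for only `32 |γ|` such blocks.
-/

open Set MeasureTheory
open scoped NNReal

theorem exists_eq_zero_of_integral_mul_integral_nonpos {f : ℝ → ℝ} {a b c : ℝ} (hab : a < b)
    (hbc : b < c) (hf : ContinuousOn f (Icc a c))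
    (h : (∫ s in a..b, f s) * (∫ s in b..c, f s) ≤ 0) : ∃ t ∈ Icc a c, f t = 0 := by
  have attains_average : ∀ p q, a ≤ p → p < q → q ≤ c →
      ∃ x ∈ Icc a c, ∫ s in p..q, f s = (q - p) * f x := by
    intro p q hp hpq hq
    have hsub : uIcc p q ⊆ Icc a c := by
      rw [uIcc_of_le hpq.le]
      exact Icc_subset_Icc hp hq
    obtain ⟨x, hx, hfx⟩ := exists_eq_interval_average hpq.ne (hf.mono hsub)
    refine ⟨x, hsub (uIoo_subset_uIcc_self hx), ?_⟩
    rw [hfx, interval_average_eq_div, mul_div_cancel₀ _ (sub_pos.2 hpq).ne']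
  obtain ⟨x, hx, hfx⟩ := attains_average a b le_rfl hab hbc.le
  obtain ⟨y, hy, hfy⟩ := attains_average b c hab.le hbc le_rfl
  have hxy : f x * f y ≤ 0 := by
    have hpos : 0 < (b - a) * (c - b) := mul_pos (sub_pos.2 hab) (sub_pos.2 hbc)
    rw [hfx, hfy, mul_mul_mul_comm] at h
    exact nonpos_of_mul_nonpos_right h hpos
  have hsub : uIcc x y ⊆ Icc a c := ordConnected_Icc.uIcc_subset hx hy
  have h0 : (0 : ℝ) ∈ uIcc (f x) (f y) := by
    rw [mem_uIcc]
    exact (mul_nonpos_iff.1 hxy).symm.imp id And.symm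
  obtain ⟨t, ht, hft⟩ := intermediate_value_uIcc (hf.mono hsub) h0
  exact ⟨t, hsub ht, hft⟩

theorem nsmul_le_sub_of_forall_le_sub {G : Type*} [AddCommGroup G] [PartialOrder G]
    [IsOrderedAddMonoid G] {f : ℕ → G} {δ : G} {p m : ℕ}
    (h : ∀ k, k + p ≤ m → δ ≤ f (k + p) - f k) {j : ℕ} (hj : p * j ≤ m) :
    j • δ ≤ f (p * j) - f 0 := by
  calc j • δ = (Finset.range j).card • δ := by rw [Finset.card_range]
    _ ≤ ∑ i ∈ Finset.range j, (f (p * (i + 1)) - f (p * i)) :=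
        Finset.card_nsmul_le_sum _ _ _ fun i hi =>
          h (p * i) ((Nat.mul_le_mul_left p (Finset.mem_range.1 hi)).trans hj)
    _ = f (p * j) - f 0 := Finset.sum_range_sub (fun i => f (p * i)) j

/-! ### The first variation at an interface -/

/-- The derivative `ξ(s) / (1 - s²)` of the potential generated by `ξ`. -/
noncomputable def potentialSlope (ξ : ℝ → ℝ) (s : ℝ) : ℝ :=
  ξ s / (1 - s ^ 2)

/-- The potential generated by `ξ`, normalized to vanish at the equator; `pot n z` is the case
`ξ = xi n z`. -/
noncomputable def potential (ξ : ℝ → ℝ) (t : ℝ) : ℝ :=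
  ∫ s in (0 : ℝ)..t, potentialSlope ξ s

/-- The geodesic curvature of the circle of latitude at height `x` on the unit sphere, signed with
respect to the normal pointing south. -/
noncomputable def latitudeCurvature (x : ℝ) : ℝ :=
  x / √(1 - x ^ 2)

/-- The first variation of the energy at an interface of height `x` and orientation `ε`, that is,
the left-hand side of the Euler–Lagrange equation; `ε = 1` if `{u = 1}` lies to the north of the
interface, and `ε = -1` if it lies to the south. -/
noncomputable def firstVariation (γ : ℝ) (ξ : ℝ → ℝ) (ε x : ℝ) : ℝ :=
  ε * latitudeCurvature x + 4 * γ * potential ξ x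

/-- The Euler–Lagrange equation for three consecutive interfaces at heights `a`, `b`, `c`, whose
orientations alternate. The Lagrange multiplier is eliminated by equating first variations. -/
def IsCriticalTriple (γ : ℝ) (ξ : ℝ → ℝ) (a b c : ℝ) : Prop :=
  ∃ ε : ℝ, |ε| = 1 ∧ firstVariation γ ξ ε a = firstVariation γ ξ (-ε) b ∧
    firstVariation γ ξ (-ε) b = firstVariation γ ξ ε c

theorem le_latitudeCurvature {x : ℝ} (h0 : 0 ≤ x) (h1 : x < 1) : x ≤ latitudeCurvature x := by
  have hpos : 0 < √(1 - x ^ 2) := Real.sqrt_pos.2 (by nlinarith)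
  exact le_div_self h0 hpos (Real.sqrt_le_one.2 (sub_le_self 1 (sq_nonneg x)))

theorem latitudeCurvature_neg (x : ℝ) : latitudeCurvature (-x) = -latitudeCurvature x := by
  rw [latitudeCurvature, latitudeCurvature, neg_sq, neg_div]

theorem potential_comp_neg (ξ : ℝ → ℝ) (x : ℝ) :
    potential (fun s => ξ (-s)) (-x) = -potential ξ x := by
  have h := intervalIntegral.integral_comp_neg (a := 0) (b := -x) (potentialSlope ξ)
  simp only [potentialSlope, neg_sq, neg_neg, neg_zero] at h
  simp only [potential, potentialSlope]
  rw [h, intervalIntegral.integral_symm]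

theorem firstVariation_comp_neg (γ : ℝ) (ξ : ℝ → ℝ) (ε x : ℝ) :
    firstVariation γ (fun s => ξ (-s)) ε (-x) = -firstVariation γ ξ ε x := by
  rw [firstVariation, firstVariation, latitudeCurvature_neg, potential_comp_neg]
  ring

theorem IsCriticalTriple.comp_neg {γ : ℝ} {ξ : ℝ → ℝ} {a b c : ℝ}
    (h : IsCriticalTriple γ ξ a b c) :
    IsCriticalTriple γ (fun s => ξ (-s)) (-c) (-b) (-a) := by
  obtain ⟨ε, hε, hab, hbc⟩ := h
  exact ⟨ε, hε, by simp only [firstVariation_comp_neg, hbc],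
    by simp only [firstVariation_comp_neg, hab]⟩

/-! ### Three consecutive interfaces on one side of the equator -/

theorem continuousOn_potentialSlope {ξ : ℝ → ℝ} {S : Set ℝ} (hS : S ⊆ Ioo (-1) 1)
    (hξ : ContinuousOn ξ S) : ContinuousOn (potentialSlope ξ) S :=
  hξ.div (by fun_prop) fun s hs => by nlinarith [(hS hs).1, (hS hs).2]

theorem potential_sub_potential {ξ : ℝ → ℝ} {S : Set ℝ} [S.OrdConnected] (hS : S ⊆ Ioo (-1) 1)
    (hξ : ContinuousOn ξ S) {a b : ℝ} (h0 : 0 ∈ S) (ha : a ∈ S) (hb : b ∈ S) :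
    potential ξ b - potential ξ a = ∫ s in a..b, potentialSlope ξ s := by
  have hslope := continuousOn_potentialSlope hS hξ
  have integrable : ∀ x ∈ S, IntervalIntegrable (potentialSlope ξ) volume 0 x := fun x hx =>
    (hslope.mono (OrdConnected.uIcc_subset ‹_› h0 hx)).intervalIntegrable
  exact intervalIntegral.integral_interval_sub_left (integrable b hb) (integrable a ha)

section Northern

variable {γ : ℝ} {ξ : ℝ → ℝ} {K : ℝ≥0} {a b c ε : ℝ}

theorem mul_latitudeCurvature_add_eq (hξ : ContinuousOn ξ (Ico 0 1)) (ha : a ∈ Ico 0 1)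
    (hb : b ∈ Ico 0 1) (h : firstVariation γ ξ ε a = firstVariation γ ξ (-ε) b) :
    ε * (latitudeCurvature a + latitudeCurvature b) =
      4 * γ * ∫ s in a..b, potentialSlope ξ s := by
  have hS : Ico (0 : ℝ) 1 ⊆ Ioo (-1) 1 := fun x hx => ⟨by linarith [hx.1], hx.2⟩
  rw [← potential_sub_potential hS hξ ⟨le_rfl, one_pos⟩ ha hb]
  rw [firstVariation, firstVariation] at h
  linarith

theorem IsCriticalTriple.exists_eq_zero (h : IsCriticalTriple γ ξ a b c)
    (hξ : ContinuousOn ξ (Ico 0 1)) (ha : 0 ≤ a) (hab : a < b) (hbc : b < c) (hc : c < 1) :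
    ∃ t ∈ Icc a c, ξ t = 0 := by
  obtain ⟨ε, hε, h₁, h₂⟩ := h
  have ha' : a ∈ Ico 0 1 := ⟨ha, by linarith⟩
  have hb' : b ∈ Ico 0 1 := ⟨by linarith, by linarith⟩
  have hc' : c ∈ Ico 0 1 := ⟨by linarith, hc⟩
  have hsub : Icc a c ⊆ Ico 0 1 := Icc_subset_Ico_right hc |>.trans (Ico_subset_Ico_left ha)
  have hsub' : Icc a c ⊆ Ioo (-1) 1 := fun x hx => ⟨by linarith [hx.1], by linarith [hx.2]⟩
  have hA := mul_latitudeCurvature_add_eq hξ ha' hb' h₁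
  have hB := mul_latitudeCurvature_add_eq (ε := -ε) hξ hb' hc' (by rwa [neg_neg])
  have hopp : (∫ s in a..b, potentialSlope ξ s) * (∫ s in b..c, potentialSlope ξ s) ≤ 0 := by
    have hκa := le_latitudeCurvature ha'.1 ha'.2
    have hκb := le_latitudeCurvature hb'.1 hb'.2
    have hκc := le_latitudeCurvature hc'.1 hc'.2
    have hε2 : ε ^ 2 = 1 := by rw [← sq_abs, hε, one_pow]
    have hpos : 0 < (latitudeCurvature a + latitudeCurvature b) *
        (latitudeCurvature b + latitudeCurvature c) :=
      mul_pos (by linarith) (by linarith)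
    by_contra! hsame
    have hnonneg := mul_nonneg (sq_nonneg (4 * γ)) hsame.le
    rw [sq, mul_mul_mul_comm, ← hA, ← hB, mul_mul_mul_comm, mul_neg, ← sq, hε2] at hnonneg
    linarith
  obtain ⟨t, ht, hzero⟩ := exists_eq_zero_of_integral_mul_integral_nonpos hab hbc
    (continuousOn_potentialSlope hsub' (hξ.mono hsub)) hopp
  have hden : 1 - t ^ 2 ≠ 0 := by nlinarith [(hsub' ht).1, (hsub' ht).2]
  exact ⟨t, ht, (div_eq_zero_iff.1 hzero).resolve_right hden⟩

theorem abs_potentialSlope_le (hξ : LipschitzOnWith K ξ (Icc 0 1)) (hpole : ξ 1 = 0) {s : ℝ}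
    (hs : s ∈ Ico 0 1) : |potentialSlope ξ s| ≤ K := by
  have hden : 1 - s ≤ 1 - s ^ 2 := by nlinarith [hs.1, hs.2]
  have hlip : |ξ s| ≤ K * (1 - s) := by
    have := hξ.dist_le_mul s ⟨hs.1, hs.2.le⟩ 1 ⟨zero_le_one, le_rfl⟩
    rwa [Real.dist_eq, Real.dist_eq, hpole, sub_zero, abs_sub_comm,
      abs_of_pos (sub_pos.2 hs.2)] at this
  have hpos : 0 < 1 - s ^ 2 := (sub_pos.2 hs.2).trans_le hden
  rw [potentialSlope, abs_div, abs_of_pos hpos, div_le_iff₀ hpos]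
  exact hlip.trans (mul_le_mul_of_nonneg_left hden K.2)

theorem abs_potentialSlope_le_mul_of_eq_zero (hξ : LipschitzOnWith K ξ (Icc 0 1)) (hpole : ξ 1 = 0)
    (hc : c < 1) {s t : ℝ} (hs : s ∈ Icc 0 c) (ht : t ∈ Icc 0 c) (hzero : ξ t = 0) :
    |potentialSlope ξ s| ≤ 2 * K * c := by
  rcases le_total (1 / 2) c with hc2 | hc2
  · have hslope := abs_potentialSlope_le hξ hpole (s := s) ⟨hs.1, hs.2.trans_lt hc⟩
    nlinarith [K.2]
  · have hlip : |ξ s| ≤ K * c := by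
      have := hξ.dist_le_mul s ⟨hs.1, hs.2.trans hc.le⟩ t ⟨ht.1, ht.2.trans hc.le⟩
      rw [Real.dist_eq, hzero, sub_zero] at this
      have hdist : dist s t ≤ c := (Real.dist_le_of_mem_Icc hs ht).trans_eq (sub_zero c)
      exact this.trans (mul_le_mul_of_nonneg_left hdist K.2)
    have hden : 1 / 2 ≤ 1 - s ^ 2 := by nlinarith [hs.1, hs.2]
    have hpos : 0 < 1 - s ^ 2 := one_half_pos.trans_le hden
    rw [potentialSlope, abs_div, abs_of_pos hpos, div_le_iff₀ hpos]
    have : 0 ≤ K * c := (abs_nonneg _).trans hlip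
    nlinarith

theorem IsCriticalTriple.one_le_mul_last_gap (h : IsCriticalTriple γ ξ a b c)
    (hξ : LipschitzOnWith K ξ (Icc 0 1)) (hpole : ξ 1 = 0) (ha : 0 ≤ a) (hab : a < b) (hbc : b < c)
    (hc : c < 1) : 1 ≤ 8 * |γ| * K * (c - b) := by
  have hcont : ContinuousOn ξ (Ico 0 1) := hξ.continuousOn.mono Ico_subset_Icc_self
  obtain ⟨t, ht, hzero⟩ := h.exists_eq_zero hcont ha hab hbc hc
  obtain ⟨ε, hε, -, heq⟩ := h
  have hb : 0 < b := by linarith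
  have hc0 : 0 < c := by linarith
  have hκb := le_latitudeCurvature hb.le (hbc.trans hc)
  have hκc := le_latitudeCurvature hc0.le hc
  have hint : |∫ s in b..c, potentialSlope ξ s| ≤ 2 * K * c * (c - b) := by
    rw [← abs_of_pos (sub_pos.2 hbc), ← Real.norm_eq_abs]
    refine intervalIntegral.norm_integral_le_of_norm_le_const fun s hs => ?_
    rw [uIoc_of_le hbc.le] at hs
    exact abs_potentialSlope_le_mul_of_eq_zero hξ hpole hc ⟨hb.le.trans hs.1.le, hs.2⟩
      ⟨ha.trans ht.1, ht.2⟩ hzero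
  have hcurv : latitudeCurvature b + latitudeCurvature c =
      4 * |γ| * |∫ s in b..c, potentialSlope ξ s| := by
    have hκ := congrArg abs <| mul_latitudeCurvature_add_eq (ε := -ε) hcont ⟨hb.le, hbc.trans hc⟩
      ⟨hc0.le, hc⟩ (by rwa [neg_neg])
    rwa [abs_mul, abs_neg, hε, one_mul, abs_of_nonneg (by linarith), abs_mul, abs_mul,
      abs_of_pos four_pos] at hκ
  refine le_of_mul_le_mul_left ?_ hc0
  calc c * 1 ≤ latitudeCurvature b + latitudeCurvature c := by linarith
    _ ≤ 4 * |γ| * (2 * K * c * (c - b)) := by rw [hcurv]; gcongr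
    _ = c * (8 * |γ| * K * (c - b)) := by ring

end Northern

theorem IsCriticalTriple.one_le_mul_first_gap {γ : ℝ} {ξ : ℝ → ℝ} {K : ℝ≥0} {a b c : ℝ}
    (h : IsCriticalTriple γ ξ a b c) (hξ : LipschitzOnWith K ξ (Icc (-1) 0)) (hpole : ξ (-1) = 0)
    (ha : -1 < a) (hab : a < b) (hbc : b < c) (hc : c ≤ 0) : 1 ≤ 8 * |γ| * K * (b - a) := by
  have hrefl : LipschitzOnWith K (fun s => ξ (-s)) (Icc 0 1) := by
    refine LipschitzOnWith.of_dist_le_mul fun s hs t ht => ?_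
    rw [← dist_neg_neg s t]
    exact hξ.dist_le_mul _ ⟨neg_le_neg hs.2, neg_nonpos.2 hs.1⟩ _
      ⟨neg_le_neg ht.2, neg_nonpos.2 ht.1⟩
  have hgap := h.comp_neg.one_le_mul_last_gap hrefl hpole (neg_nonneg.2 hc) (neg_lt_neg hbc)
    (neg_lt_neg hab) (neg_lt.1 ha)
  rwa [neg_sub_neg] at hgap

/-! ### Step patterns -/

section Pattern

variable (n : ℕ) (z : ℕ → ℝ)

theorem abs_pattern (t : ℝ) : |pattern n z t| = 1 :=
  abs_neg_one_pow _

theorem measurable_pattern : Measurable (pattern n z) := by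
  have hprod : pattern n z =
      fun t => (∏ i ∈ Finset.Icc 1 n, if z i ≤ t then (-1 : ℝ) else 1) * (-1) := by
    funext t
    rw [pattern, pow_succ, ← Finset.prod_filter, Finset.prod_const]
  rw [hprod]
  exact (Finset.measurable_prod _ fun i _ =>
    Measurable.ite measurableSet_Ici measurable_const measurable_const).mul_const _

theorem intervalIntegrable_pattern (a b : ℝ) : IntervalIntegrable (pattern n z) volume a b :=
  (intervalIntegrable_const (c := (1 : ℝ))).mono_fun
    (measurable_pattern n z).aestronglyMeasurable
    (.of_forall fun t => (abs_pattern n z t).trans norm_one.symm |>.le)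

theorem abs_mass_le_one : |mass n z| ≤ 1 := by
  have hint : ‖∫ t in (-1 : ℝ)..1, pattern n z t‖ ≤ 1 * |1 - (-1)| :=
    intervalIntegral.norm_integral_le_of_norm_le_const fun t _ => (abs_pattern n z t).le
  rw [mass, abs_mul, abs_of_pos one_half_pos]
  rw [Real.norm_eq_abs] at hint
  norm_num at hint
  linarith

theorem lipschitzWith_xi : LipschitzWith 2 (xi n z) := by
  have integrable : ∀ x y, IntervalIntegrable (fun s => pattern n z s - mass n z) volume x y :=
    fun x y => (intervalIntegrable_pattern n z x y).sub intervalIntegrable_const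
  refine LipschitzWith.of_dist_le_mul fun s t => ?_
  rw [dist_eq_norm, Real.dist_eq, xi, xi,
    intervalIntegral.integral_interval_sub_left (integrable _ _) (integrable _ _)]
  refine intervalIntegral.norm_integral_le_of_norm_le_const fun x _ => ?_
  calc ‖pattern n z x - mass n z‖ ≤ |pattern n z x| + |mass n z| := abs_sub _ _
    _ ≤ 1 + 1 := add_le_add (abs_pattern n z x).le (abs_mass_le_one n z)
    _ = (2 : ℝ≥0) := by norm_num

theorem xi_neg_one : xi n z (-1) = 0 :=
  intervalIntegral.integral_same

theorem xi_one : xi n z 1 = 0 := by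
  rw [xi, intervalIntegral.integral_sub (intervalIntegrable_pattern n z _ _)
    intervalIntegrable_const, intervalIntegral.integral_const, mass, smul_eq_mul]
  ring

end Pattern

/-! ### Counting interfaces -/

section Count

variable {γ : ℝ} {n : ℕ} {z : ℕ → ℝ} {k : ℕ}

theorem IsConfig.mem_Icc (hz : IsConfig n z) (hk : k ≤ n + 1) : z k ∈ Icc (-1) 1 := by
  obtain ⟨hfirst, hlast, hlt⟩ := hz
  have hmono : ∀ i j, i ≤ j → j ≤ n + 1 → z i ≤ z j := fun i j hij hj =>
    hij.eq_or_lt.elim (fun h => h ▸ le_rfl) fun h => (hlt i j h hj).le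
  exact ⟨hfirst ▸ hmono 0 k k.zero_le hk, hlast ▸ hmono k (n + 1) hk le_rfl⟩

theorem IsCritical.isCriticalTriple (hcrit : IsCritical γ n z) (hk : 1 ≤ k) (hkn : k + 2 ≤ n) :
    IsCriticalTriple γ (xi n z) (z k) (z (k + 1)) (z (k + 2)) := by
  obtain ⟨l, hl⟩ := hcrit
  have euler_lagrange : ∀ i, 1 ≤ i → i ≤ n → firstVariation γ (xi n z) ((-1) ^ (i + 1)) (z i) = l :=
    fun i hi hin => by
      rw [firstVariation, latitudeCurvature, ← mul_div_assoc]
      exact hl i hi hin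
  have h₀ := euler_lagrange k hk (by omega)
  have h₁ := euler_lagrange (k + 1) (by omega) (by omega)
  have h₂ := euler_lagrange (k + 2) (by omega) hkn
  rw [pow_succ, mul_neg_one] at h₁
  rw [show k + 2 + 1 = k + 1 + 2 from rfl, pow_add, neg_one_sq, mul_one] at h₂
  exact ⟨(-1) ^ (k + 1), abs_neg_one_pow _, h₀.trans h₁.symm, h₁.trans h₂.symm⟩

theorem IsCritical.one_le_mul_four_gaps (hcrit : IsCritical γ n z) (hz : IsConfig n z) (hk : 1 ≤ k)
    (hkn : k + 4 ≤ n) : 1 ≤ 16 * |γ| * (z (k + 4) - z k) := by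
  have hlt : ∀ i, i ≤ n → z i < z (i + 1) := fun i hi =>
    hz.2.2 i (i + 1) i.lt_succ_self (Nat.succ_le_succ hi)
  have h₀ := hlt k (by omega)
  have h₁ := hlt (k + 1) (by omega)
  have h₂ := hlt (k + 2) (by omega)
  have h₃ := hlt (k + 3) (by omega)
  have hsouth : -1 < z k := hz.1 ▸ hz.2.2 0 k hk (by omega)
  have hnorth : z (k + 4) < 1 := hz.2.1 ▸ hz.2.2 (k + 4) (n + 1) (by omega) le_rfl
  have hlip := fun S => (lipschitzWith_xi n z).lipschitzOnWith (s := S)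
  obtain ⟨d, hd, hgap⟩ : ∃ d ≤ z (k + 4) - z k, 1 ≤ 8 * |γ| * (2 : ℝ≥0) * d := by
    rcases le_total 0 (z (k + 2)) with h | h
    · exact ⟨z (k + 4) - z (k + 3), by linarith,
        (hcrit.isCriticalTriple (k := k + 2) (by omega) hkn).one_le_mul_last_gap (hlip _)
          (xi_one n z) h h₂ h₃ hnorth⟩
    · exact ⟨z (k + 1) - z k, by linarith,
        (hcrit.isCriticalTriple hk (by omega)).one_le_mul_first_gap (hlip _)
          (xi_neg_one n z) hsouth h₀ h₁ h⟩
  calc 1 ≤ 8 * |γ| * (2 : ℝ≥0) * d := hgap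
    _ ≤ 8 * |γ| * (2 : ℝ≥0) * (z (k + 4) - z k) := by gcongr
    _ = 16 * |γ| * (z (k + 4) - z k) := by push_cast; ring

theorem number_of_interfaces_bounded_general (hz : IsConfig n z) (hcrit : IsCritical γ n z) :
    (n : ℝ) ≤ 128 * |γ| + 4 := by
  set j := (n - 1) / 4
  have hgaps : (j : ℝ) ≤ 16 * |γ| * (z (4 * j + 1) - z 1) := by
    have := nsmul_le_sub_of_forall_le_sub (f := fun i => 16 * |γ| * z (i + 1)) (δ := (1 : ℝ))
      (p := 4) (m := n - 1) (j := j) (fun k hk => ?_) (by omega)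
    · rwa [nsmul_one, ← mul_sub] at this
    · rw [← mul_sub, add_right_comm]
      exact hcrit.one_le_mul_four_gaps hz (by omega) (by omega)
  have hwidth : z (4 * j + 1) - z 1 ≤ 2 := by
    linarith [(hz.mem_Icc (k := 4 * j + 1) (by omega)).2, (hz.mem_Icc (k := 1) (by omega)).1]
  have hn : (n : ℝ) ≤ 4 * j + 4 := by exact_mod_cast (by omega : n ≤ 4 * j + 4)
  nlinarith [abs_nonneg γ]

end Count

/-- Proposition: number of interfaces.  For every `γ > 0` there is an
upper bound `N` on the number of interfaces of any axisymmetric critical point of `E_γ`. -/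
theorem number_of_interfaces_bounded (γ : ℝ) (hγ : 0 < γ) :
    ∃ N : ℕ, ∀ n : ℕ, 1 ≤ n → ∀ z : ℕ → ℝ,
      IsConfig n z → IsCritical γ n z → n ≤ N := by
  obtain ⟨N, hN⟩ := exists_nat_ge (128 * |γ| + 4)
  exact ⟨N, fun n _ z hz hcrit =>
    Nat.cast_le.1 ((number_of_interfaces_bounded_general hz hcrit).trans hN)⟩
end
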